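/- arXiv:1312.7241 — 3 statements merged into one kernel-verified Lean document; each statement's English description precedes it below -/
import Mathlib

section
/- If (T, f) solves the Duffing boundary value problem for (m, β), then f is an even function: f(-t) = f(t) for all t ∈ [-T, T]. -/
/-!
The right-hand side of `x'' = -x³ + β x` does not involve `x'`, so flipping the sign of the velocity
while reversing time maps phase-plane trajectories to phase-plane trajectories. The trajectory of
`f` starts at `(0, m)` and ends at `(0, -m)`, so its reversed image also starts at `(0, m)`, and by
uniqueness of solutions the two coincide. Comparing positions gives `f (-t) = f t`.
-/

open Real

/-- The Duffing boundary value problem for `(m, β)`: a time `T > 0` and a `C^∞` function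
`f` with `f'' = -f³ + β·f` on `[-T, T]`, boundary values `f(±T) = 0`,
`f'(-T) = m`, `f'(T) = -m`, and `f > 0` on `(-T, T)`. -/
def IsDuffingSolution (m : ℕ) (β T : ℝ) (f : ℝ → ℝ) : Prop :=
  0 < T ∧ ContDiff ℝ (⊤ : ℕ∞) f ∧
    (∀ t ∈ Set.Icc (-T) T, deriv (deriv f) t = -(f t) ^ 3 + β * f t) ∧
    f (-T) = 0 ∧ f T = 0 ∧ deriv f (-T) = (m : ℝ) ∧ deriv f T = -(m : ℝ) ∧
    (∀ t ∈ Set.Ioo (-T) T, 0 < f t)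

section Reversibility

open Set
open scoped Pointwise

variable {E : Type*} [NormedAddCommGroup E] [NormedSpace ℝ E]
  {v : E → E} {R : E →L[ℝ] E} {γ η : ℝ → E}

theorem eqOn_Icc_of_isIntegralCurveOn_of_locallyLipschitz {a b : ℝ} (hv : LocallyLipschitz v)
    (hγ : IsIntegralCurveOn γ (fun _ ↦ v) (Icc a b))
    (hη : IsIntegralCurveOn η (fun _ ↦ v) (Icc a b)) (ha : γ a = η a) :
    EqOn γ η (Icc a b) := by
  have hcompact : IsCompact (γ '' Icc a b ∪ η '' Icc a b) :=
    (isCompact_Icc.image_of_continuousOn hγ.continuousOn).union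
      (isCompact_Icc.image_of_continuousOn hη.continuousOn)
  obtain ⟨K, hK⟩ := hv.locallyLipschitzOn.exists_lipschitzOnWith_of_compact hcompact
  have right_deriv {δ : ℝ → E} (hδ : IsIntegralCurveOn δ (fun _ ↦ v) (Icc a b)) :
      ∀ t ∈ Ico a b, HasDerivWithinAt δ (v (δ t)) (Ici t) t := fun t ht ↦
    (hδ t (Ico_subset_Icc_self ht)).mono_of_mem_nhdsWithin (Icc_mem_nhdsGE_of_mem ht)
  exact ODE_solution_unique_of_mem_Icc_right (fun _ _ ↦ hK)
    hγ.continuousOn (right_deriv hγ) (fun t ht ↦ .inl ⟨t, Ico_subset_Icc_self ht, rfl⟩)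
    hη.continuousOn (right_deriv hη) (fun t ht ↦ .inr ⟨t, Ico_subset_Icc_self ht, rfl⟩) ha

/-- A reversing symmetry of the autonomous system `x' = v x`: a linear map `R` carrying `v` to `-v`,
so that `R` composed with time reversal preserves trajectories. In contrast to part of the
literature, `R` need not be an involution. -/
def IsReversingSymmetry (R : E →L[ℝ] E) (v : E → E) : Prop :=
  ∀ x, v (R x) = -R (v x)

namespace IsReversingSymmetry

theorem isIntegralCurveOn_comp_neg {s : Set ℝ} (hR : IsReversingSymmetry R v)
    (hγ : IsIntegralCurveOn γ (fun _ ↦ v) s) :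
    IsIntegralCurveOn (fun t ↦ R (γ (-t))) (fun _ ↦ v) (-s) := by
  intro t ht
  have hmaps : MapsTo Neg.neg (-s) s := fun _ hu ↦ hu
  have hneg : HasDerivWithinAt (γ ∘ Neg.neg) (-v (γ (-t))) (-s) t := by
    simpa only [neg_one_smul] using
      (hγ (-t) ht).scomp t (hasDerivAt_neg t).hasDerivWithinAt hmaps
  exact (R.hasFDerivAt.comp_hasDerivWithinAt t hneg).congr_deriv ((map_neg R _).trans (hR _).symm)

theorem eqOn_comp_neg {T : ℝ} (hR : IsReversingSymmetry R v) (hv : LocallyLipschitz v)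
    (hγ : IsIntegralCurveOn γ (fun _ ↦ v) (Icc (-T) T)) (hT : R (γ T) = γ (-T)) :
    EqOn (fun t ↦ R (γ (-t))) γ (Icc (-T) T) := by
  have hreversed : IsIntegralCurveOn (fun t ↦ R (γ (-t))) (fun _ ↦ v) (Icc (-T) T) := by
    simpa only [neg_Icc, neg_neg] using hR.isIntegralCurveOn_comp_neg hγ
  exact eqOn_Icc_of_isIntegralCurveOn_of_locallyLipschitz hv hreversed hγ (by simpa only [neg_neg])

end IsReversingSymmetry

end Reversibility

section SecondOrder

open Set

variable {E : Type*} [NormedAddCommGroup E] {g : E × E → E}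

/-- The phase-space vector field `(x, y) ↦ (y, g (x, y))`, whose trajectories `(x, x')` correspond
to the solutions of the second-order equation `x'' = g (x, x')`. -/
def phaseField (g : E × E → E) (p : E × E) : E × E :=
  (p.2, g p)

theorem locallyLipschitz_phaseField (hg : LocallyLipschitz g) : LocallyLipschitz (phaseField g) :=
  LipschitzWith.prod_snd.locallyLipschitz.prodMk hg

variable [NormedSpace ℝ E]

variable (E) in
/-- The phase-space map `(x, y) ↦ (x, -y)`, reversing velocities and fixing positions. -/
def velocityFlip : E × E →L[ℝ] E × E :=
  (ContinuousLinearMap.id ℝ E).prodMap (-ContinuousLinearMap.id ℝ E)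

theorem velocityFlip_apply (p : E × E) : velocityFlip E p = (p.1, -p.2) :=
  rfl

theorem isReversingSymmetry_velocityFlip (hg : ∀ x y, g (x, -y) = g (x, y)) :
    IsReversingSymmetry (velocityFlip E) (phaseField g) := fun p ↦ by
  simp only [phaseField, velocityFlip_apply, hg, Prod.neg_mk, neg_neg]

theorem duffing_even_general (hg : LocallyLipschitz g) (hg_even : ∀ x y, g (x, -y) = g (x, y))
    {T : ℝ} {f f' : ℝ → E}
    (hf : ∀ t ∈ Icc (-T) T, HasDerivWithinAt f (f' t) (Icc (-T) T) t)
    (hf' : ∀ t ∈ Icc (-T) T, HasDerivWithinAt f' (g (f t, f' t)) (Icc (-T) T) t)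
    (hT : f T = f (-T)) (hT' : -f' T = f' (-T)) :
    ∀ t ∈ Icc (-T) T, f (-t) = f t := by
  intro t ht
  have htrajectory :
      IsIntegralCurveOn (fun t ↦ (f t, f' t)) (fun _ ↦ phaseField g) (Icc (-T) T) :=
    fun t ht ↦ (hf t ht).prodMk (hf' t ht)
  have hreflect := (isReversingSymmetry_velocityFlip hg_even).eqOn_comp_neg
    (locallyLipschitz_phaseField hg) htrajectory (Prod.ext hT hT')
  exact congrArg Prod.fst (hreflect ht)

end SecondOrder

/-- The right-hand side `-x³ + β x` of the Duffing equation, as a function of position and velocity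
`(x, x')`. -/
def duffingForce (β : ℝ) (p : ℝ × ℝ) : ℝ :=
  -p.1 ^ 3 + β * p.1

theorem locallyLipschitz_duffingForce (β : ℝ) : LocallyLipschitz (duffingForce β) := by
  have hsmooth : ContDiff ℝ 1 (duffingForce β) := by
    unfold duffingForce
    fun_prop
  exact hsmooth.locallyLipschitz

namespace IsDuffingSolution

variable {m : ℕ} {β T : ℝ} {f : ℝ → ℝ}

theorem hasDerivAt (h : IsDuffingSolution m β T f) (t : ℝ) : HasDerivAt f (deriv f t) t :=
  (h.2.1.differentiable (by simp) t).hasDerivAt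

theorem hasDerivAt_deriv (h : IsDuffingSolution m β T f) {t : ℝ} (ht : t ∈ Set.Icc (-T) T) :
    HasDerivAt (deriv f) (duffingForce β (f t, deriv f t)) t := by
  obtain ⟨-, hsmooth, hode, -⟩ := h
  have hdiff : Differentiable ℝ (deriv f) :=
    (contDiff_infty_iff_deriv.mp hsmooth).2.differentiable (by simp)
  exact (hdiff t).hasDerivAt.congr_deriv (hode t ht)

end IsDuffingSolution

/-- A Duffing solution is an even function. -/
theorem duffing_even (m : ℕ) (hm : 0 < m) (β T : ℝ) (f : ℝ → ℝ)
    (h : IsDuffingSolution m β T f) :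
    ∀ t ∈ Set.Icc (-T) T, f (-t) = f t := by
  have ⟨_, _, _, hleft, hright, hleft', hright', _⟩ := h
  exact duffing_even_general (locallyLipschitz_duffingForce β) (fun _ _ ↦ rfl)
    (fun t _ ↦ (h.hasDerivAt t).hasDerivWithinAt)
    (fun _ ht ↦ (h.hasDerivAt_deriv ht).hasDerivWithinAt)
    (hright.trans hleft.symm) (by rw [hleft', hright', neg_neg])
end

section
/- If (T, f) solves the Duffing boundary value problem for (m, β), then ∫_{-T}^{T} f(t)⁵ dt = √2 · (2m² + 3β²) · arcsin(k) + 3mβ, where k = √((1 + β/√(2m² + β²))/2). -/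
/-!
For `f'' = -f³ + β f` the phase curve `z = (f² - β) + i √2 f'` solves the linear equation
`z' = -i √2 f z`, so its argument has derivative `-√2 f`. At a point of positive energy with
`f' = 0` one has `f² > β`; hence `z` never meets the branch cut of the argument, and
`√2 ∫ f = arg z(a) - arg z(b)` holds without any correction by multiples of `2π`. The boundary
conditions make `z(b)` the complex conjugate of `z(a)`, so this difference is `2 arg z(a)`, and the
half-angle formula turns it into `4 arcsin k`.

Conservation of the energy `E = f'² - β f² + f⁴/2` reduces the fifth moment to the first one:
the derivative of `f² f' / 2 + 3 β f' / 2` is `(E + 3 β² / 2) f - f⁵`.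
-/

open Real

/-- The elliptic modulus `k = √((1 + β/√(2m² + β²))/2)` associated to `(m, β)`. -/
noncomputable def duffingModulus (m : ℕ) (β : ℝ) : ℝ :=
  Real.sqrt ((1 + β / Real.sqrt (2 * (m : ℝ) ^ 2 + β ^ 2)) / 2)

lemma integral_eq_sub_of_hasDerivWithinAt {E : Type*} [NormedAddCommGroup E] [NormedSpace ℝ E]
    [CompleteSpace E] {a b : ℝ} {g g' : ℝ → E}
    (hg : ∀ t ∈ Set.uIcc a b, HasDerivWithinAt g (g' t) (Set.uIcc a b) t)
    (hint : IntervalIntegrable g' MeasureTheory.volume a b) :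
    ∫ t in a..b, g' t = g b - g a := by
  refine intervalIntegral.integral_eq_sub_of_hasDeriv_right
    (fun t ht => (hg t ht).continuousWithinAt) (fun t ht => ?_) hint
  exact ((hg t (Set.Ioo_subset_Icc_self ht)).hasDerivAt
    (Icc_mem_nhds ht.1 ht.2)).hasDerivWithinAt

lemma hasDerivWithinAt_complex_mk {x y : ℝ → ℝ} {x' y' t : ℝ} {s : Set ℝ}
    (hx : HasDerivWithinAt x x' s t) (hy : HasDerivWithinAt y y' s t) :
    HasDerivWithinAt (fun t => (⟨x t, y t⟩ : ℂ)) ⟨x', y'⟩ s t := by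
  simpa only [Complex.mk_eq_add_mul_I] using!
    hx.ofReal_comp.add (hy.ofReal_comp.mul_const Complex.I)

lemma two_mul_arcsin_sqrt_eq_arg {z : ℂ} (hz : z ≠ 0) (him : 0 ≤ z.im) :
    2 * arcsin √((1 - z.re / ‖z‖) / 2) = z.arg := by
  have harg : 0 ≤ z.arg := Complex.arg_nonneg_iff.2 him
  have hpi : z.arg ≤ π := z.arg_le_pi
  rw [← Complex.cos_arg hz, ← sin_half_eq_sqrt harg (by linarith),
    arcsin_sin (by linarith) (by linarith)]
  ring

/-- The conserved energy of the Duffing equation at position `x` and velocity `y`, normalised to be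
twice the mechanical energy. -/
noncomputable def duffingEnergy (β x y : ℝ) : ℝ :=
  y ^ 2 - β * x ^ 2 + x ^ 4 / 2

/-- The complex phase coordinate of the state with position `x` and velocity `y`; along solutions of
the Duffing equation it obeys a linear equation and rotates with angular velocity `-√2 x`. -/
noncomputable def duffingPhase (β x y : ℝ) : ℂ :=
  ⟨x ^ 2 - β, √2 * y⟩

lemma duffingPhase_mem_slitPlane {β x y : ℝ} (hE : 0 < duffingEnergy β x y) :
    duffingPhase β x y ∈ Complex.slitPlane := by
  rw [Complex.mem_slitPlane_iff]
  rcases eq_or_ne y 0 with rfl | hy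
  · left
    have hx : 0 < x ^ 2 * (x ^ 2 / 2 - β) := by
      unfold duffingEnergy at hE
      linear_combination hE
    have hβ : 0 < x ^ 2 / 2 - β := pos_of_mul_pos_right hx (sq_nonneg x)
    change 0 < x ^ 2 - β
    linarith [sq_nonneg x]
  · exact Or.inr (mul_ne_zero (by positivity) hy)

lemma duffingPhase_neg (β x y : ℝ) :
    duffingPhase β x (-y) = (starRingEnd ℂ) (duffingPhase β x y) :=
  Complex.ext rfl (mul_neg _ _)

lemma two_mul_arcsin_sqrt_eq_arg_duffingPhase {v : ℝ} (β : ℝ) (hv : 0 < v) :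
    2 * arcsin √((1 + β / √(2 * v ^ 2 + β ^ 2)) / 2) = (duffingPhase β 0 v).arg := by
  have him : 0 < (duffingPhase β 0 v).im := mul_pos (by positivity) hv
  have hre : (duffingPhase β 0 v).re = -β := by simp [duffingPhase]
  have hnorm : ‖duffingPhase β 0 v‖ = √(2 * v ^ 2 + β ^ 2) := by
    rw [Complex.norm_eq_sqrt_sq_add_sq, hre]
    simp only [duffingPhase, mul_pow, sq_sqrt zero_le_two]
    ring_nf
  have hz : duffingPhase β 0 v ≠ 0 := fun h => him.ne' (by rw [h, Complex.zero_im])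
  rw [← two_mul_arcsin_sqrt_eq_arg hz him.le, hre, hnorm, neg_div, sub_neg_eq_add]

/-- `f` solves the Duffing equation `f'' = -f³ + β f` on `s` with velocity `f'`. Derivatives are
taken within `s`, so that they are one-sided at the endpoints of an interval. -/
structure IsDuffingSolutionOn (β : ℝ) (f f' : ℝ → ℝ) (s : Set ℝ) : Prop where
  hasDerivWithinAt : ∀ t ∈ s, HasDerivWithinAt f (f' t) s t
  hasDerivWithinAt_velocity : ∀ t ∈ s, HasDerivWithinAt f' (-(f t) ^ 3 + β * f t) s t

namespace IsDuffingSolutionOn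

variable {β a b t u : ℝ} {f f' : ℝ → ℝ} {s : Set ℝ}

lemma continuousOn (h : IsDuffingSolutionOn β f f' s) : ContinuousOn f s :=
  fun t ht => (h.hasDerivWithinAt t ht).continuousWithinAt

lemma hasDerivWithinAt_energy (h : IsDuffingSolutionOn β f f' s) (ht : t ∈ s) :
    HasDerivWithinAt (fun t => duffingEnergy β (f t) (f' t)) 0 s t := by
  have hf := h.hasDerivWithinAt t ht
  have hf' := h.hasDerivWithinAt_velocity t ht
  refine (((hf'.pow 2).sub ((hf.pow 2).const_mul β)).add ((hf.pow 4).div_const 2)).congr_deriv ?_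
  push_cast
  ring

lemma energy_eq (h : IsDuffingSolutionOn β f f' s) (hs : Convex ℝ s) (ht : t ∈ s) (hu : u ∈ s) :
    duffingEnergy β (f t) (f' t) = duffingEnergy β (f u) (f' u) := by
  have hle := Convex.norm_image_sub_le_of_norm_hasDerivWithin_le
    (fun _ ht => h.hasDerivWithinAt_energy ht) (fun _ _ => norm_zero.le) hs hu ht
  rwa [zero_mul, norm_le_zero_iff, sub_eq_zero] at hle

lemma hasDerivWithinAt_phase (h : IsDuffingSolutionOn β f f' s) (ht : t ∈ s) :
    HasDerivWithinAt (fun t => duffingPhase β (f t) (f' t))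
      (⟨0, -(√2 * f t)⟩ * duffingPhase β (f t) (f' t)) s t := by
  have hsqrt : √2 ^ 2 = (2 : ℝ) := sq_sqrt zero_le_two
  have hf := h.hasDerivWithinAt t ht
  have hf' := h.hasDerivWithinAt_velocity t ht
  refine (hasDerivWithinAt_complex_mk ((hf.pow 2).sub_const β)
    (hf'.const_mul √2)).congr_deriv (Complex.ext ?_ ?_)
  · simp only [duffingPhase, Complex.mul_re]
    push_cast
    linear_combination -f t * f' t * hsqrt
  · simp only [duffingPhase, Complex.mul_im]
    ring

lemma hasDerivWithinAt_arg_phase (h : IsDuffingSolutionOn β f f' s) (ht : t ∈ s)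
    (hE : 0 < duffingEnergy β (f t) (f' t)) :
    HasDerivWithinAt (fun t => (duffingPhase β (f t) (f' t)).arg) (-(√2 * f t)) s t := by
  have hslit := duffingPhase_mem_slitPlane hE
  have hlog := (h.hasDerivWithinAt_phase ht).clog_real hslit
  rw [mul_div_cancel_right₀ _ (Complex.slitPlane_ne_zero hslit)] at hlog
  simpa only [Function.comp_def, Complex.imCLM_apply, Complex.log_im] using
    Complex.imCLM.hasFDerivAt.comp_hasDerivWithinAt t hlog

lemma intervalIntegrable (h : IsDuffingSolutionOn β f f' (Set.uIcc a b)) :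
    IntervalIntegrable f MeasureTheory.volume a b :=
  h.continuousOn.intervalIntegrable

theorem sqrt_two_mul_integral (h : IsDuffingSolutionOn β f f' (Set.uIcc a b))
    (hE : 0 < duffingEnergy β (f a) (f' a)) :
    √2 * ∫ t in a..b, f t
      = (duffingPhase β (f a) (f' a)).arg - (duffingPhase β (f b) (f' b)).arg := by
  have hpos (t) (ht : t ∈ Set.uIcc a b) : 0 < duffingEnergy β (f t) (f' t) :=
    hE.trans_eq (h.energy_eq (convex_uIcc a b) Set.left_mem_uIcc ht)
  have hFTC := integral_eq_sub_of_hasDerivWithinAt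
    (fun t ht => h.hasDerivWithinAt_arg_phase ht (hpos t ht))
    (h.intervalIntegrable.const_mul √2).neg
  rw [intervalIntegral.integral_neg, intervalIntegral.integral_const_mul] at hFTC
  linarith

theorem integral_pow_five (h : IsDuffingSolutionOn β f f' (Set.uIcc a b)) :
    ∫ t in a..b, f t ^ 5
      = (duffingEnergy β (f a) (f' a) + 3 / 2 * β ^ 2) * (∫ t in a..b, f t)
        - ((f b ^ 2 + 3 * β) * f' b - (f a ^ 2 + 3 * β) * f' a) / 2 := by
  set E := duffingEnergy β (f a) (f' a)
  have hderiv (t) (ht : t ∈ Set.uIcc a b) :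
      HasDerivWithinAt (fun t => (f t ^ 2 + 3 * β) * f' t / 2)
        ((E + 3 / 2 * β ^ 2) * f t - f t ^ 5) (Set.uIcc a b) t := by
    have henergy : duffingEnergy β (f t) (f' t) = E :=
      h.energy_eq (convex_uIcc a b) ht Set.left_mem_uIcc
    refine (((((h.hasDerivWithinAt t ht).pow 2).add_const (3 * β)).mul
      (h.hasDerivWithinAt_velocity t ht)).div_const 2).congr_deriv ?_
    rw [← henergy, duffingEnergy]
    simp only [Pi.pow_apply]
    push_cast
    ring
  have hfirst := h.intervalIntegrable.const_mul (E + 3 / 2 * β ^ 2)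
  have hfifth : IntervalIntegrable (fun t => f t ^ 5) MeasureTheory.volume a b :=
    (h.continuousOn.pow 5).intervalIntegrable
  have hFTC := integral_eq_sub_of_hasDerivWithinAt hderiv (hfirst.sub hfifth)
  rw [intervalIntegral.integral_sub hfirst hfifth, intervalIntegral.integral_const_mul] at hFTC
  linarith

theorem integral_eq_arcsin {v : ℝ} (h : IsDuffingSolutionOn β f f' (Set.uIcc a b)) (hv : 0 < v)
    (hfa : f a = 0) (hfb : f b = 0) (hfa' : f' a = v) (hfb' : f' b = -v) :
    ∫ t in a..b, f t = 2 * √2 * arcsin √((1 + β / √(2 * v ^ 2 + β ^ 2)) / 2) := by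
  have hE : 0 < duffingEnergy β 0 v := by
    suffices 0 < v ^ 2 by simpa [duffingEnergy]
    positivity
  have harg := Complex.slitPlane_arg_ne_pi (duffingPhase_mem_slitPlane hE)
  have hint := h.sqrt_two_mul_integral (by rwa [hfa, hfa'])
  rw [hfa, hfa', hfb, hfb', duffingPhase_neg, Complex.arg_conj, if_neg harg,
    ← two_mul_arcsin_sqrt_eq_arg_duffingPhase β hv] at hint
  have hsqrt : √2 ^ 2 = (2 : ℝ) := sq_sqrt zero_le_two
  linear_combination √2 / 2 * hint - (∫ t in a..b, f t) / 2 * hsqrt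

end IsDuffingSolutionOn

lemma IsDuffingSolution.isDuffingSolutionOn {m : ℕ} {β T : ℝ} {f : ℝ → ℝ}
    (h : IsDuffingSolution m β T f) :
    IsDuffingSolutionOn β f (deriv f) (Set.uIcc (-T) T) := by
  obtain ⟨hT, hsmooth, hode, -⟩ := h
  obtain ⟨hdiff, hsmooth'⟩ := contDiff_infty_iff_deriv.1 hsmooth
  rw [Set.uIcc_of_le (by linarith)]
  refine ⟨fun t _ => (hdiff t).hasDerivAt.hasDerivWithinAt, fun t ht => ?_⟩
  rw [← hode t ht]
  exact (hsmooth'.differentiable (by simp) t).hasDerivAt.hasDerivWithinAt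

theorem duffing_integral_f_fifth_general {β v a b : ℝ} {f f' : ℝ → ℝ} (hv : 0 < v)
    (h : IsDuffingSolutionOn β f f' (Set.uIcc a b))
    (hfa : f a = 0) (hfb : f b = 0) (hfa' : f' a = v) (hfb' : f' b = -v) :
    ∫ t in a..b, f t ^ 5
      = √2 * (2 * v ^ 2 + 3 * β ^ 2) * arcsin √((1 + β / √(2 * v ^ 2 + β ^ 2)) / 2)
        + 3 * v * β := by
  rw [h.integral_pow_five, h.integral_eq_arcsin hv hfa hfb hfa' hfb', hfa, hfb, hfa', hfb',
    duffingEnergy]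
  ring

/-- `∫_{-T}^{T} f⁵ = √2 · (2m² + 3β²) · arcsin k + 3mβ`. -/
theorem duffing_integral_f_fifth (m : ℕ) (hm : 0 < m) (β T : ℝ) (f : ℝ → ℝ)
    (h : IsDuffingSolution m β T f) :
    (∫ t in (-T)..T, (f t) ^ 5)
      = Real.sqrt 2 * (2 * (m : ℝ) ^ 2 + 3 * β ^ 2) * Real.arcsin (duffingModulus m β)
        + 3 * (m : ℝ) * β := by
  obtain ⟨-, -, -, hleft, hright, hleft', hright', -⟩ := id h
  exact duffing_integral_f_fifth_general (Nat.cast_pos.2 hm) h.isDuffingSolutionOn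
    hleft hright hleft' hright'
end

section
/- Let f be a C^∞ positive function on an open interval I such that the set {t ∈ I : f'(t) ≠ 0} is dense in I. If B₄[f] vanishes identically on I, then B₁[f], B₂[f], and B₃[f] also vanish identically on I. -/
/-!
The components satisfy the trace identity `B₁ + B₂ + B₃ + B₄ = 0` and, as a consequence of
`ρᵢ' = ρᵢ₊₁ - ρ₁ ρᵢ`, the Bianchi-type identity `B₄' = ρ₁ (B₃ - B₄)`. If `B₄ ≡ 0`, the latter reads
`ρ₁ B₃ = 0`, so `B₃` vanishes wherever `f' ≠ 0`, hence everywhere by density and continuity. Since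
`B₁ = B₂`, the trace identity then forces `B₁` and `B₂` to vanish too.
-/

open Real

/-- `ρ_i = f⁽ⁱ⁾/f`, the ratio of the `i`-th derivative of `f` to `f`. -/
noncomputable def rho (f : ℝ → ℝ) (i : ℕ) (t : ℝ) : ℝ := iteratedDeriv i f t / f t

/-- The component `B₁ = B₂` of the Bach tensor of the cohomogeneity-one metric `g(f)`. -/
noncomputable def B1 (f : ℝ → ℝ) (t : ℝ) : ℝ :=
  (-(rho f 4 t) + rho f 1 t * rho f 3 t + 2 * (rho f 2 t) ^ 2 - (rho f 1 t) ^ 2 * rho f 2 t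
    + 20 * (f t) ^ 2 * rho f 2 t + 20 * (f t) ^ 2 * (rho f 1 t) ^ 2
    - 48 * (f t) ^ 4 + 64 * (f t) ^ 2 - 11) / 6

/-- The component `B₂` of the Bach tensor of the cohomogeneity-one metric `g(f)`. -/
noncomputable def B2 (f : ℝ → ℝ) (t : ℝ) : ℝ :=
  (-(rho f 4 t) + rho f 1 t * rho f 3 t + 2 * (rho f 2 t) ^ 2 - (rho f 1 t) ^ 2 * rho f 2 t
    + 20 * (f t) ^ 2 * rho f 2 t + 20 * (f t) ^ 2 * (rho f 1 t) ^ 2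
    - 48 * (f t) ^ 4 + 64 * (f t) ^ 2 - 11) / 6

/-- The component `B₃` of the Bach tensor of the cohomogeneity-one metric `g(f)`. -/
noncomputable def B3 (f : ℝ → ℝ) (t : ℝ) : ℝ :=
  (2 * rho f 4 t - 4 * rho f 1 t * rho f 3 t - 3 * (rho f 2 t) ^ 2
    + 4 * (rho f 1 t) ^ 2 * rho f 2 t - 40 * (f t) ^ 2 * rho f 2 t
    - 20 * (f t) ^ 2 * (rho f 1 t) ^ 2 + 80 * (f t) ^ 4 - 96 * (f t) ^ 2 + 11) / 6

/-- The component `B₄` of the Bach tensor of the cohomogeneity-one metric `g(f)`. -/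
noncomputable def B4 (f : ℝ → ℝ) (t : ℝ) : ℝ :=
  (2 * rho f 1 t * rho f 3 t - (rho f 2 t) ^ 2 - 2 * (rho f 1 t) ^ 2 * rho f 2 t
    - 20 * (f t) ^ 2 * (rho f 1 t) ^ 2 + 16 * (f t) ^ 4 - 32 * (f t) ^ 2 + 11) / 6

open Topology

section IteratedDeriv

variable {𝕜 E : Type*} [NontriviallyNormedField 𝕜] [NormedAddCommGroup E] [NormedSpace 𝕜 E]
  {f : 𝕜 → E} {x : 𝕜}

lemma contDiffAt_iteratedDeriv {m n : WithTop ℕ∞} {i : ℕ} (hf : ContDiffAt 𝕜 n f x)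
    (hmn : m + i ≤ n) : ContDiffAt 𝕜 m (iteratedDeriv i f) x := by
  rw [iteratedDeriv_eq_equiv_comp]
  exact (LinearIsometryEquiv.contDiff _).contDiffAt.comp x (hf.iteratedFDeriv_right hmn)

lemma hasDerivAt_iteratedDeriv {i : ℕ} (hf : ContDiffAt 𝕜 (i + 1) f x) :
    HasDerivAt (iteratedDeriv i f) (iteratedDeriv (i + 1) f x) x := by
  rw [iteratedDeriv_succ]
  exact ((contDiffAt_iteratedDeriv hf (add_comm 1 _).le).differentiableAt one_ne_zero).hasDerivAt

end IteratedDeriv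

section Bach

variable {f : ℝ → ℝ} {t : ℝ}

lemma rho_one (f : ℝ → ℝ) (t : ℝ) : rho f 1 t = deriv f t / f t := by
  rw [rho, iteratedDeriv_one]

lemma hasDerivAt_mul_rho_one (hf : DifferentiableAt ℝ f t) (ht : f t ≠ 0) :
    HasDerivAt f (f t * rho f 1 t) t := by
  rw [rho_one, mul_div_cancel₀ _ ht]
  exact hf.hasDerivAt

lemma continuousAt_rho {i : ℕ} (hf : ContDiffAt ℝ i f t) (ht : f t ≠ 0) :
    ContinuousAt (rho f i) t :=
  (contDiffAt_iteratedDeriv hf (zero_add _).le).continuousAt.div hf.continuousAt ht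

lemma hasDerivAt_rho {i : ℕ} (hf : ContDiffAt ℝ (i + 1) f t) (ht : f t ≠ 0) :
    HasDerivAt (rho f i) (rho f (i + 1) t - rho f 1 t * rho f i t) t := by
  have hf' := hasDerivAt_mul_rho_one (hf.differentiableAt (by simp)) ht
  refine ((hasDerivAt_iteratedDeriv hf).div hf' ht).congr_deriv ?_
  simp only [rho]
  field_simp

lemma trace_bach (f : ℝ → ℝ) (t : ℝ) : B1 f t + B2 f t + B3 f t + B4 f t = 0 := by
  simp only [B1, B2, B3, B4]
  ring

lemma hasDerivAt_B4 (hf : ContDiffAt ℝ 4 f t) (ht : f t ≠ 0) :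
    HasDerivAt (B4 f) (rho f 1 t * (B3 f t - B4 f t)) t := by
  have h₀ := hasDerivAt_mul_rho_one (hf.differentiableAt (by norm_num)) ht
  have h₁ := hasDerivAt_rho (i := 1) (hf.of_le (by norm_num)) ht
  have h₂ := hasDerivAt_rho (i := 2) (hf.of_le (by norm_num)) ht
  have h₃ := hasDerivAt_rho (i := 3) (hf.of_le (by norm_num)) ht
  have hB4 := ((h₁.const_mul 2).fun_mul h₃)
    |>.fun_sub (h₂.fun_pow 2)
    |>.fun_sub (((h₁.fun_pow 2).const_mul 2).fun_mul h₂)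
    |>.fun_sub (((h₀.fun_pow 2).const_mul 20).fun_mul (h₁.fun_pow 2))
    |>.fun_add ((h₀.fun_pow 4).const_mul 16)
    |>.fun_sub ((h₀.fun_pow 2).const_mul 32)
    |>.add_const 11
    |>.div_const 6
  refine hB4.congr_deriv ?_
  simp only [B3, B4]
  push_cast
  ring

lemma continuousAt_B3 (hf : ContDiffAt ℝ 4 f t) (ht : f t ≠ 0) : ContinuousAt (B3 f) t := by
  have h₀ := hf.continuousAt
  have h₁ := continuousAt_rho (i := 1) (hf.of_le (by norm_num)) ht
  have h₂ := continuousAt_rho (i := 2) (hf.of_le (by norm_num)) ht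
  have h₃ := continuousAt_rho (i := 3) (hf.of_le (by norm_num)) ht
  have h₄ := continuousAt_rho (i := 4) hf ht
  unfold B3
  fun_prop

lemma B3_eq_zero_of_eventually_B4_eq_zero (hf : ContDiffAt ℝ 4 f t) (ht : f t ≠ 0)
    (hf' : deriv f t ≠ 0) (hB4 : B4 f =ᶠ[𝓝 t] 0) : B3 f t = 0 := by
  have hρ : rho f 1 t ≠ 0 := rho_one f t ▸ div_ne_zero hf' ht
  have hderiv : HasDerivAt (B4 f) 0 t := (hasDerivAt_zero t).congr_of_eventuallyEq hB4
  have hprod : rho f 1 t * (B3 f t - B4 f t) = 0 := (hasDerivAt_B4 hf ht).unique hderiv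
  have hsub : B3 f t - B4 f t = 0 := (mul_eq_zero.mp hprod).resolve_left hρ
  rwa [hB4.eq_of_nhds, Pi.zero_apply, sub_zero] at hsub

theorem bach_flat_from_B4_general {U : Set ℝ} (hU : IsOpen U) (hf : ContDiffOn ℝ 4 f U)
    (hne : ∀ t ∈ U, f t ≠ 0) (hdense : U ⊆ closure {s | s ∈ U ∧ deriv f s ≠ 0})
    (hB4 : ∀ t ∈ U, B4 f t = 0) :
    ∀ t ∈ U, B1 f t = 0 ∧ B2 f t = 0 ∧ B3 f t = 0 := by
  have hfAt {t : ℝ} (ht : t ∈ U) : ContDiffAt ℝ 4 f t := hf.contDiffAt (hU.mem_nhds ht)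
  have hcont : ContinuousOn (B3 f) U := fun t ht ↦
    (continuousAt_B3 (hfAt ht) (hne t ht)).continuousWithinAt
  have hregular : Set.EqOn (B3 f) 0 {s | s ∈ U ∧ deriv f s ≠ 0} := fun s ⟨hs, hs'⟩ ↦
    B3_eq_zero_of_eventually_B4_eq_zero (hfAt hs) (hne s hs) hs'
      (Filter.eventuallyEq_of_mem (hU.mem_nhds hs) hB4)
  have hB3 : Set.EqOn (B3 f) 0 U :=
    hregular.of_subset_closure hcont continuousOn_const (fun _ hs ↦ hs.1) hdense
  intro t ht
  have hB3t : B3 f t = 0 := hB3 ht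
  have hB12 : B1 f t = B2 f t := rfl
  have htrace := trace_bach f t
  rw [hB3t, hB4 t ht, hB12] at htrace
  have hB2 : B2 f t = 0 := by linarith
  exact ⟨hB12.trans hB2, hB2, hB3t⟩

end Bach

/-- If the regular set of `f` is dense and `B₄[f] ≡ 0`, then `B₁, B₂, B₃` all vanish. -/
theorem bach_flat_from_B4 (a b : ℝ) (f : ℝ → ℝ)
    (hf : ContDiff ℝ (⊤ : ℕ∞) f) (hpos : ∀ t ∈ Set.Ioo a b, 0 < f t)
    (hdense : ∀ t ∈ Set.Ioo a b,
      t ∈ closure {s | s ∈ Set.Ioo a b ∧ deriv f s ≠ 0})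
    (hB4 : ∀ t ∈ Set.Ioo a b, B4 f t = 0) :
    ∀ t ∈ Set.Ioo a b, B1 f t = 0 ∧ B2 f t = 0 ∧ B3 f t = 0 :=
  bach_flat_from_B4_general isOpen_Ioo (contDiff_infty.mp hf 4).contDiffOn
    (fun t ht ↦ (hpos t ht).ne') hdense hB4
end
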